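/- arXiv:1503.03851 — 2 statements merged into one kernel-verified Lean document; each statement's English description precedes it below -/
import Mathlib

section
/- Let f : ℝ^n → ℝ be a multilinear polynomial of degree at most d, i.e., f(z_1,…,z_n) = ∑_{S ⊆ {1,…,n}, |S| ≤ d} c_S · ∏_{i∈S} z_i for real coefficients c_S. Let Z_1,…,Z_n be independent random variables each distributed according to 𝒵. Then E[f(Z_1,…,Z_n)⁴] ≤ 81^d · (E[f(Z_1,…,Z_n)²])². -/
open MeasureTheory Finset

noncomputable section

/-- The distribution `𝒵` on `ℝ`: takes value `3` with probability `1/4` and value `-1`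
with probability `3/4`. -/
def Zdist : Measure ℝ := (4⁻¹ : ENNReal) • Measure.dirac 3 + ((3 : ENNReal) / 4) • Measure.dirac (-1)

/-- Expectation as an iterated finite average. -/
def Ex : (n : ℕ) → ((Fin n → ℝ) → ℝ) → ℝ
  | 0, F => F Fin.elim0
  | n + 1, F => (1/4) * Ex n (fun z => F (Fin.cons 3 z)) + (3/4) * Ex n (fun z => F (Fin.cons (-1) z))

lemma Ex_add (n : ℕ) (F G : (Fin n → ℝ) → ℝ) :
    Ex n (fun z => F z + G z) = Ex n F + Ex n G := by
  induction n with
  | zero => rfl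
  | succ n ih => simp only [Ex, ih]; ring

lemma Ex_smul (n : ℕ) (a : ℝ) (F : (Fin n → ℝ) → ℝ) :
    Ex n (fun z => a * F z) = a * Ex n F := by
  induction n with
  | zero => rfl
  | succ n ih => simp only [Ex, ih]; ring

lemma Ex_nonneg (n : ℕ) (F : (Fin n → ℝ) → ℝ) (h : ∀ z, 0 ≤ F z) : 0 ≤ Ex n F := by
  induction n with
  | zero => exact h _
  | succ n ih =>
    have h1 := ih (fun z => F (Fin.cons 3 z)) (fun z => h _)
    have h2 := ih (fun z => F (Fin.cons (-1) z)) (fun z => h _)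
    simp only [Ex]; linarith

instance : IsProbabilityMeasure Zdist := by
  constructor
  simp only [Zdist, Measure.add_apply, Measure.smul_apply, measure_univ, smul_eq_mul, mul_one]
  rw [← one_div, ENNReal.div_add_div_same]
  norm_num
  exact ENNReal.div_self (by norm_num) (by norm_num)

lemma integral_eq_Ex (n : ℕ) (F : (Fin n → ℝ) → ℝ) (hF : Continuous F) :
    Integrable F (Measure.pi fun _ : Fin n => Zdist) ∧
    ∫ z, F z ∂(Measure.pi fun _ : Fin n => Zdist) = Ex n F := by
  induction n with
  | zero =>
    rw [Measure.pi_of_empty _ (Fin.elim0 : Fin 0 → ℝ)]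
    refine ⟨integrable_dirac (by simp), ?_⟩
    rw [integral_dirac]; rfl
  | succ n ih =>
    have mp := (measurePreserving_piFinSuccAbove (fun _ : Fin (n+1) => Zdist) 0).symm
    have hc : ∀ a : ℝ, Continuous (fun z : Fin n → ℝ => F (Fin.cons a z)) := fun a => by
      refine hF.comp (continuous_pi fun i => ?_)
      refine Fin.cases ?_ (fun j => ?_) i
      · simp only [Fin.cons_zero]; exact continuous_const
      · simp only [Fin.cons_succ]; exact continuous_apply j
    have hG : ∀ p : ℝ × (Fin n → ℝ),
        F ((MeasurableEquiv.piFinSuccAbove (fun _ : Fin (n+1) => ℝ) 0).symm p)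
          = F (Fin.cons p.1 p.2) := by
      intro p
      simp [MeasurableEquiv.piFinSuccAbove]
      rfl
    have hGc : Continuous (fun p : ℝ × (Fin n → ℝ) => F (Fin.cons p.1 p.2)) := by
      refine hF.comp (continuous_pi fun i => ?_)
      refine Fin.cases ?_ (fun j => ?_) i
      · simp only [Fin.cons_zero]; exact continuous_fst
      · simp only [Fin.cons_succ]; exact (continuous_apply j).comp continuous_snd
    have hpr : Zdist.prod (Measure.pi fun _ : Fin n => Zdist) =
        (4⁻¹ : ENNReal) • (Measure.pi fun _ : Fin n => Zdist).map (Prod.mk 3) +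
        ((3 : ENNReal) / 4) • (Measure.pi fun _ : Fin n => Zdist).map (Prod.mk (-1)) := by
      generalize hm : (Measure.pi fun _ : Fin n => Zdist) = m
      have : IsProbabilityMeasure m := by rw [← hm]; infer_instance
      rw [Zdist, Measure.add_prod, Measure.prod_smul_left, Measure.prod_smul_left,
        Measure.dirac_prod, Measure.dirac_prod]
    have hI : ∀ a : ℝ, Integrable (fun p : ℝ × (Fin n → ℝ) => F (Fin.cons p.1 p.2))
        ((Measure.pi fun _ : Fin n => Zdist).map (Prod.mk a)) := fun a => by
      rw [integrable_map_measure hGc.aestronglyMeasurable (by fun_prop)]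
      exact (ih _ (hc a)).1
    have hV : ∀ a : ℝ, ∫ p : ℝ × (Fin n → ℝ), F (Fin.cons p.1 p.2)
        ∂((Measure.pi fun _ : Fin n => Zdist).map (Prod.mk a)) =
        Ex n (fun z => F (Fin.cons a z)) := fun a => by
      rw [integral_map (by fun_prop) hGc.aestronglyMeasurable]
      exact (ih _ (hc a)).2
    have e1 : (4⁻¹ : ENNReal) ≠ ⊤ := by simp
    have e2 : ((3 : ENNReal) / 4) ≠ ⊤ := ENNReal.div_ne_top (by simp) (by simp)
    constructor
    · rw [← mp.integrable_comp_emb (MeasurableEquiv.measurableEmbedding _)]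
      have : (F ∘ (MeasurableEquiv.piFinSuccAbove (fun _ : Fin (n+1) => ℝ) 0).symm) =
          fun p => F (Fin.cons p.1 p.2) := funext hG
      rw [this, hpr]
      exact ((hI 3).smul_measure e1).add_measure ((hI (-1)).smul_measure e2)
    · rw [← mp.integral_comp (MeasurableEquiv.measurableEmbedding _)]
      simp only [hG]
      rw [hpr, integral_add_measure ((hI 3).smul_measure e1) ((hI (-1)).smul_measure e2),
        integral_smul_measure, integral_smul_measure, hV, hV, Ex]
      simp

lemma Ex_cs (n : ℕ) (g h : (Fin n → ℝ) → ℝ) :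
    (Ex n (fun z => g z ^ 2 * h z ^ 2)) ^ 2 ≤
      Ex n (fun z => g z ^ 4) * Ex n (fun z => h z ^ 4) := by
  have key : ∀ t : ℝ, 0 ≤ Ex n (fun z => g z ^ 4) * (t * t) +
      (2 * Ex n (fun z => g z ^ 2 * h z ^ 2)) * t + Ex n (fun z => h z ^ 4) := by
    intro t
    have h0 := Ex_nonneg n (fun z => (t * g z ^ 2 + h z ^ 2) ^ 2) (fun z => sq_nonneg _)
    have : (fun z => (t * g z ^ 2 + h z ^ 2) ^ 2) =
        fun z => ((t * t) * g z ^ 4 + (2 * t) * (g z ^ 2 * h z ^ 2)) + h z ^ 4 := by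
      funext z; ring
    rw [this, Ex_add, Ex_add, Ex_smul, Ex_smul] at h0
    linarith
  have := discrim_le_zero key
  unfold discrim at this
  nlinarith

/-- The multilinear polynomial. -/
def mlp (n : ℕ) (c : Finset (Fin n) → ℝ) (z : Fin n → ℝ) : ℝ :=
  ∑ S : Finset (Fin n), c S * ∏ i ∈ S, z i

lemma mlp_cons (n : ℕ) (c : Finset (Fin (n+1)) → ℝ) (a : ℝ) (z : Fin n → ℝ) :
    mlp (n+1) c (Fin.cons a z) =
      mlp n (fun S => c (S.map (Fin.succEmb n))) z +
      a * mlp n (fun S => c (insert 0 (S.map (Fin.succEmb n)))) z := by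
  unfold mlp
  have h0 : ∀ S : Finset (Fin n), (0 : Fin (n+1)) ∉ S.map (Fin.succEmb n) := by
    intro S; simp [Fin.succ_ne_zero]
  have hu : (univ : Finset (Finset (Fin (n+1)))) =
      (insert 0 ((univ : Finset (Fin n)).map (Fin.succEmb n))).powerset := by
    have : insert 0 ((univ : Finset (Fin n)).map (Fin.succEmb n)) = univ := by
      ext i; refine Fin.cases ?_ (fun j => ?_) i <;> simp
    rw [this, powerset_univ]
  have hp : ((univ : Finset (Fin n)).map (Fin.succEmb n)).powerset =
      (univ : Finset (Finset (Fin n))).map (mapEmbedding (Fin.succEmb n)).toEmbedding := by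
    ext S
    simp only [mem_powerset, mem_map, mem_univ, true_and, subset_map_iff]
    constructor
    · rintro ⟨u, -, rfl⟩; exact ⟨u, rfl⟩
    · rintro ⟨u, rfl⟩; exact ⟨u, subset_univ _, rfl⟩
  rw [hu, sum_powerset_insert (h0 univ), hp, sum_map, sum_map, mul_sum]
  congr 1
  · refine sum_congr rfl fun S _ => ?_
    simp
  · refine sum_congr rfl fun S _ => ?_
    simp only [RelEmbedding.coe_toEmbedding, mapEmbedding_apply]
    rw [prod_insert (h0 S)]
    simp
    ring

lemma mlp_continuous (n : ℕ) (c : Finset (Fin n) → ℝ) : Continuous (mlp n c) := by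
  unfold mlp; fun_prop

lemma bonami_arith (P A B G H M : ℝ) (hP : 0 ≤ P) (hA : 0 ≤ A) (hB : 0 ≤ B)
    (hH0 : 0 ≤ H) (hG : G ≤ P * A ^ 2) (hH : 81 * H ≤ P * B ^ 2)
    (hM : M ^ 2 ≤ G * H) :
    G + 30 * M + 33 * H ≤ P * (A + 3 * B) ^ 2 := by
  have h1 : (9 * M) ^ 2 ≤ (P * (A * B)) ^ 2 := by
    have := mul_le_mul hG hH (by linarith) (by positivity)
    nlinarith
  have h2 : 9 * M ≤ P * (A * B) := le_of_sq_le_sq h1 (by positivity)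
  have h3 : 0 ≤ P * (A * B) := by positivity
  have h4 : 0 ≤ P * B ^ 2 := by positivity
  nlinarith

lemma bonami_Ex (n d : ℕ) (c : Finset (Fin n) → ℝ)
    (hdeg : ∀ S : Finset (Fin n), d < S.card → c S = 0) :
    Ex n (fun z => mlp n c z ^ 4) ≤ 81 ^ d * (Ex n (fun z => mlp n c z ^ 2)) ^ 2 := by
  induction n generalizing d with
  | zero =>
    simp only [Ex]
    have : (1:ℝ) ≤ 81 ^ d := one_le_pow₀ (by norm_num)
    nlinarith [sq_nonneg (mlp 0 c Fin.elim0 ^ 2)]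
  | succ n ih =>
    simp only [Ex, mlp_cons]
    set g := mlp n (fun S => c (S.map (Fin.succEmb n))) with hg
    set h := mlp n (fun S => c (insert 0 (S.map (Fin.succEmb n)))) with hh
    have h0 : ∀ S : Finset (Fin n), (0 : Fin (n+1)) ∉ S.map (Fin.succEmb n) := by
      intro S; simp [Fin.succ_ne_zero]
    have hG := ih d (fun S => c (S.map (Fin.succEmb n))) (fun S hS => hdeg _ (by simpa using hS))
    have hH : 81 * Ex n (fun z => h z ^ 4) ≤ 81 ^ d * (Ex n (fun z => h z ^ 2)) ^ 2 := by
      cases d with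
      | zero =>
        have hz : ∀ z, h z = 0 := by
          intro z
          simp only [hh, mlp]
          refine sum_eq_zero fun S _ => ?_
          rw [hdeg _ (by simp), zero_mul]
        have : Ex n (fun z => h z ^ 4) = 0 := by
          have := Ex_smul n 0 (fun _ => 0)
          simpa [hz] using this
        rw [this, mul_zero]; positivity
      | succ d =>
        have := ih d (fun S => c (insert 0 (S.map (Fin.succEmb n)))) (fun S hS => hdeg _ (by
          rw [card_insert_of_notMem (h0 S), card_map]; omega))
        rw [pow_succ]
        linarith
    have hA := Ex_nonneg n (fun z => g z ^ 2) (fun z => sq_nonneg _)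
    have hB := Ex_nonneg n (fun z => h z ^ 2) (fun z => sq_nonneg _)
    have hH0 := Ex_nonneg n (fun z => h z ^ 4) (fun z => by positivity)
    have main := bonami_arith (81 ^ d) _ _ _ _ _ (by positivity) hA hB hH0 hG hH (Ex_cs n g h)
    have e2 : ∀ a : ℝ, Ex n (fun z => (g z + a * h z) ^ 2) = Ex n (fun z => g z ^ 2)
        + (2 * a) * Ex n (fun z => g z * h z) + a ^ 2 * Ex n (fun z => h z ^ 2) := by
      intro a
      rw [← Ex_smul, ← Ex_smul, ← Ex_add, ← Ex_add]
      congr 1; funext z; ring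
    have e4 : ∀ a : ℝ, Ex n (fun z => (g z + a * h z) ^ 4) = Ex n (fun z => g z ^ 4)
        + (4 * a) * Ex n (fun z => g z ^ 3 * h z) + (6 * a ^ 2) * Ex n (fun z => g z ^ 2 * h z ^ 2)
        + (4 * a ^ 3) * Ex n (fun z => g z * h z ^ 3) + a ^ 4 * Ex n (fun z => h z ^ 4) := by
      intro a
      rw [← Ex_smul, ← Ex_smul, ← Ex_smul, ← Ex_smul, ← Ex_add, ← Ex_add, ← Ex_add, ← Ex_add]
      congr 1; funext z; ring
    have h3 : 2 * Ex n (fun z => g z * h z ^ 3) ≤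
        Ex n (fun z => g z ^ 2 * h z ^ 2) + Ex n (fun z => h z ^ 4) := by
      have h0 := Ex_nonneg n (fun z => (g z * h z - h z ^ 2) ^ 2) (fun z => sq_nonneg _)
      have : (fun z => (g z * h z - h z ^ 2) ^ 2) =
          fun z => (g z ^ 2 * h z ^ 2 + h z ^ 4) + (-2) * (g z * h z ^ 3) := by
        funext z; ring
      rw [this, Ex_add, Ex_add, Ex_smul] at h0
      linarith
    rw [e2, e2, e4, e4]
    refine le_trans (le_trans ?_ main) (le_of_eq ?_)
    · linarith
    · ring

/-- Bonami-type inequality for multilinear polynomials of degree at most `d` in i.i.d.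
`𝒵`-distributed random variables. -/
theorem bonami_Zdist (n d : ℕ) (c : Finset (Fin n) → ℝ)
    (hdeg : ∀ S : Finset (Fin n), d < S.card → c S = 0) :
    ∫ z, (∑ S : Finset (Fin n), c S * ∏ i ∈ S, z i) ^ 4
        ∂(Measure.pi fun _ : Fin n => Zdist) ≤
      81 ^ d * (∫ z, (∑ S : Finset (Fin n), c S * ∏ i ∈ S, z i) ^ 2
        ∂(Measure.pi fun _ : Fin n => Zdist)) ^ 2 := by
  have h := bonami_Ex n d c hdeg
  rw [← (integral_eq_Ex n (fun z => mlp n c z ^ 4) ((mlp_continuous n c).pow 4)).2,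
    ← (integral_eq_Ex n (fun z => mlp n c z ^ 2) ((mlp_continuous n c).pow 2)).2] at h
  exact h

end
end

section
/- Let Z_1,…,Z_n be independent random variables each distributed according to 𝒵, and let S_1, S_2, S_3, S_4 ⊆ {1,…,n} be sets such that every element of S_1 ∪ S_2 ∪ S_3 ∪ S_4 belongs to at least two of the four sets. Then E[ ∏_{r=1}^{4} ∏_{i∈S_r} Z_i ] ≥ 3^{(|S_1|+|S_2|+|S_3|+|S_4|)/2}. -/
open MeasureTheory Finset

noncomputable section

instance Zdist_prob : IsProbabilityMeasure Zdist := by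
  constructor
  simp only [Zdist, Measure.coe_add, Measure.coe_smul, Pi.add_apply, Pi.smul_apply,
    measure_univ, smul_eq_mul, mul_one]
  rw [← one_div, ENNReal.div_add_div_same]
  norm_num
  exact ENNReal.div_self (by norm_num) (by norm_num)

lemma Zdist_moment (k : ℕ) : ∫ x, x ^ k ∂Zdist = 1 / 4 * 3 ^ k + 3 / 4 * (-1) ^ k := by
  unfold Zdist
  have hd : ∀ a : ℝ, Integrable (fun x : ℝ => x ^ k) (Measure.dirac a) := fun a =>
    integrable_dirac (by simp)
  rw [integral_add_measure ((hd _).smul_measure (by simp))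
    ((hd _).smul_measure (ENNReal.div_ne_top (by simp) (by simp)))]
  simp [integral_smul_measure, integral_dirac]

lemma Zdist_moment_bound (k : ℕ) (h1 : k ≠ 1) (h4 : k ≤ 4) :
    (3 : ℝ) ^ ((k : ℝ) / 2) ≤ ∫ x, x ^ k ∂Zdist := by
  rw [Zdist_moment]
  have key : ((3 : ℝ) ^ ((k : ℝ) / 2)) ^ 2 = 3 ^ k := by
    rw [← Real.rpow_natCast, ← Real.rpow_mul (by norm_num), ← Real.rpow_natCast]
    congr 1
    push_cast
    ring
  have hm : (3 : ℝ) ^ k ≤ (1 / 4 * 3 ^ k + 3 / 4 * (-1) ^ k) ^ 2 ∧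
      (0 : ℝ) ≤ 1 / 4 * 3 ^ k + 3 / 4 * (-1) ^ k := by
    clear key
    interval_cases k
    · norm_num
    · exact absurd rfl h1
    · norm_num
    · norm_num
    · norm_num
  exact (abs_le_of_sq_le_sq' (key.le.trans hm.1) hm.2).2

/-- If every element of `S₁ ∪ S₂ ∪ S₃ ∪ S₄` belongs to at least two of the four sets, then
`E[∏_{r=1}^4 ∏_{i∈S_r} Z_i] ≥ 3^{(|S₁|+|S₂|+|S₃|+|S₄|)/2}` for i.i.d. `𝒵` variables. -/
theorem Zdist_product_lower_bound (n : ℕ) (S₁ S₂ S₃ S₄ : Finset (Fin n))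
    (h : ∀ i ∈ S₁ ∪ S₂ ∪ S₃ ∪ S₄,
      2 ≤ (if i ∈ S₁ then 1 else 0) + (if i ∈ S₂ then 1 else 0) +
          (if i ∈ S₃ then 1 else 0) + (if i ∈ S₄ then (1 : ℕ) else 0)) :
    (3 : ℝ) ^ (((S₁.card + S₂.card + S₃.card + S₄.card : ℕ) : ℝ) / 2) ≤
      ∫ z, (∏ i ∈ S₁, z i) * (∏ i ∈ S₂, z i) * (∏ i ∈ S₃, z i) * (∏ i ∈ S₄, z i)
        ∂(Measure.pi fun _ : Fin n => Zdist) := by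
  classical
  set k : Fin n → ℕ := fun i => (if i ∈ S₁ then 1 else 0) + (if i ∈ S₂ then 1 else 0) +
          (if i ∈ S₃ then 1 else 0) + (if i ∈ S₄ then (1 : ℕ) else 0) with hk
  have hprod : ∀ z : Fin n → ℝ,
      (∏ i ∈ S₁, z i) * (∏ i ∈ S₂, z i) * (∏ i ∈ S₃, z i) * (∏ i ∈ S₄, z i)
        = ∏ i, z i ^ k i := by
    intro z
    have h1 : ∀ S : Finset (Fin n), ∏ i ∈ S, z i = ∏ i, z i ^ (if i ∈ S then 1 else 0) := by
      intro S
      simp [pow_ite, Finset.prod_ite_mem]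
    rw [h1 S₁, h1 S₂, h1 S₃, h1 S₄]
    simp only [hk, pow_add, Finset.prod_mul_distrib]
  have hcard : S₁.card + S₂.card + S₃.card + S₄.card = ∑ i, k i := by
    simp [hk, Finset.sum_add_distrib]
  simp only [hprod]
  rw [integral_fintype_prod_eq_prod (fun i (x : ℝ) => x ^ k i), hcard, Nat.cast_sum,
    Finset.sum_div, Real.rpow_sum_of_pos (by norm_num)]
  refine Finset.prod_le_prod (fun i _ => by positivity) (fun i _ => ?_)
  apply Zdist_moment_bound
  · intro hi
    by_cases hu : i ∈ S₁ ∪ S₂ ∪ S₃ ∪ S₄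
    · have := h i hu
      change 2 ≤ k i at this
      omega
    · simp only [Finset.mem_union, not_or] at hu
      simp [hk, hu] at hi
  · simp only [hk]
    split_ifs <;> omega

end
end
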